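/- arXiv:2006.16871 — 2 statements merged into one kernel-verified Lean document; each statement's English description precedes it below -/
import Mathlib

section
/- There exists a Hilbert space H of holomorphic functions on the unit disk 𝔻, continuously embedded in Hol(𝔻), such that H contains all polynomials, the polynomials are dense in H, but the odd polynomials are not dense in the subspace of odd functions of H. Moreover, given any positive sequence (ω_n) with Σ 1/ω_n < ∞, H can be chosen so that ‖z^n‖_H ≤ 1 + ω_n for all n ≥ 0. -/
open Metric

/-!
A space of power series is encoded by its coefficient functionals `c n`, and point evaluation at
`z` is the sum `∑ zⁿ c n` in the dual space. Take an orthonormal basis `f, e₀, e₁, …` and, for a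
set `s` of exponents, vectors `v n` with `v n = e n` for `n ∉ s` and `v n = e n + f - ∑ e k` for
`n ∈ s`, the sum being over `k < n`, `k ∉ s`. The biorthogonal functionals are the inner products
with the vectors built in the same way from `sᶜ`. If `x` is orthogonal to all `v n`, then
`⟪e n, x⟫ = -⟪f, x⟫` for all `n ∈ s`, which forces `x = 0` by square summability as soon as `s` is
infinite. Hence, for `s` infinite and co-infinite, the `v n` span a dense subspace and their
biorthogonal functionals are total. When `s` is the set of even numbers, `f` has only odd
coefficients, yet it is orthogonal to the vectors `v n = e n` representing the odd monomials.
Rescaling prescribes the norms of the monomials, up to the growth condition that makes the power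
series converge on the disk.
-/

open Asymptotics Filter Polynomial
open scoped InnerProductSpace

lemma eball_one_eq_ball {α : Type*} [PseudoMetricSpace α] (x : α) : eball x 1 = ball x 1 := by
  rw [← ENNReal.ofReal_one, eball_ofReal]

section CoeffMap

variable {𝕜 E : Type*} [NontriviallyNormedField 𝕜] [NormedAddCommGroup E] [NormedSpace 𝕜 E]

/-- The power series `∑ zⁿ c n` with values in the dual of `E`; its sum at `z` is the evaluation at
`z` of the power series with coefficients `c n x`. -/
noncomputable def coeffSeries (c : ℕ → StrongDual 𝕜 E) :
    FormalMultilinearSeries 𝕜 𝕜 (StrongDual 𝕜 E) :=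
  fun n => ContinuousMultilinearMap.mkPiRing 𝕜 (Fin n) (c n)

/-- The map sending `x` to the function `z ↦ ∑ c n x * zⁿ`, which realizes `E` as a space of
functions. The series is summed in the dual of `E`, so that its value is `0` wherever it diverges
there. -/
noncomputable def coeffMap (c : ℕ → StrongDual 𝕜 E) : E →ₗ[𝕜] (𝕜 → 𝕜) :=
  LinearMap.pi fun z => ((coeffSeries c).sum z).toLinearMap

variable {c : ℕ → StrongDual 𝕜 E}

lemma one_le_radius_coeffSeries {w : ℕ → ℝ} {k : ℕ} (hw : ∀ n, 0 < w n)
    (hgrowth : ∀ r ∈ Set.Ioo (0 : ℝ) 1, (fun n => r ^ n) =O[atTop] w)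
    (hc : (fun n => ‖c n‖ * w n) =O[atTop] fun n => (n : ℝ) ^ k) :
    1 ≤ (coeffSeries c).radius := by
  refine ENNReal.le_of_forall_nnreal_lt fun r hr => ?_
  obtain ⟨ρ, hrρ, hρ⟩ := exists_between (show (r : ℝ) < 1 by exact_mod_cast hr)
  have hpow : (fun n : ℕ => (n : ℝ) ^ k * (r : ℝ) ^ n) =O[atTop] w :=
    (isLittleO_pow_const_mul_const_pow_const_pow_of_norm_lt k (by simpa using hrρ)).isBigO.trans
      (hgrowth ρ ⟨r.2.trans_lt hrρ, hρ⟩)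
  have hbound : (fun n => ‖c n‖ * w n * (r : ℝ) ^ n * (w n)⁻¹) =O[atTop] fun n => w n * (w n)⁻¹ :=
    ((hc.mul (isBigO_refl _ _)).trans hpow).mul (isBigO_refl _ _)
  refine (coeffSeries c).le_radius_of_isBigO (hbound.congr (fun n => ?_) fun n => ?_)
  · rw [coeffSeries, ContinuousMultilinearMap.norm_mkPiRing]
    field_simp [(hw n).ne']
  · exact mul_inv_cancel₀ (hw n).ne'

variable [CompleteSpace 𝕜]

lemma hasFPowerSeriesOnBall_coeffSeries_sum (hc : 1 ≤ (coeffSeries c).radius) :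
    HasFPowerSeriesOnBall (coeffSeries c).sum (coeffSeries c) 0 1 :=
  ((coeffSeries c).hasFPowerSeriesOnBall (one_pos.trans_le hc)).mono one_pos hc

lemma hasFPowerSeriesOnBall_coeffMap (hc : 1 ≤ (coeffSeries c).radius) (x : E) :
    HasFPowerSeriesOnBall (coeffMap c x)
      (fun n => ContinuousMultilinearMap.mkPiRing 𝕜 (Fin n) (c n x)) 0 1 := by
  convert! (ContinuousLinearMap.apply 𝕜 𝕜 x).comp_hasFPowerSeriesOnBall
    (hasFPowerSeriesOnBall_coeffSeries_sum hc) using 1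

lemma hasSum_coeffMap (hc : 1 ≤ (coeffSeries c).radius) (x : E) {z : 𝕜} (hz : z ∈ ball 0 1) :
    HasSum (fun n => c n x * z ^ n) (coeffMap c x z) := by
  rw [← eball_one_eq_ball] at hz
  simpa [mul_comm] using (hasFPowerSeriesOnBall_coeffMap hc x).hasSum hz

lemma differentiableOn_coeffMap (hc : 1 ≤ (coeffSeries c).radius) (x : E) :
    DifferentiableOn 𝕜 (coeffMap c x) (ball 0 1) :=
  eball_one_eq_ball (0 : 𝕜) ▸ (hasFPowerSeriesOnBall_coeffMap hc x).differentiableOn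

lemma exists_norm_coeffMap_le (hc : 1 ≤ (coeffSeries c).radius) {K : Set 𝕜} (hK : IsCompact K)
    (hK_sub : K ⊆ ball 0 1) : ∃ C : ℝ, ∀ x, ∀ z ∈ K, ‖coeffMap c x z‖ ≤ C * ‖x‖ := by
  have hcont : ContinuousOn (coeffSeries c).sum (ball 0 1) :=
    eball_one_eq_ball (0 : 𝕜) ▸ (hasFPowerSeriesOnBall_coeffSeries_sum hc).continuousOn
  obtain ⟨C, hC⟩ := hK.exists_bound_of_continuousOn (hcont.mono hK_sub)
  exact ⟨C, fun x z hz => ((coeffSeries c).sum z).le_of_opNorm_le (hC z hz) x⟩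

lemma eq_of_eqOn_coeffMap (hc : 1 ≤ (coeffSeries c).radius) (htotal : ∀ x, (∀ n, c n x = 0) → x = 0)
    {x y : E} (h : Set.EqOn (coeffMap c x) (coeffMap c y) (ball 0 1)) : x = y := by
  have hseries := (hasFPowerSeriesOnBall_coeffMap hc x).hasFPowerSeriesAt
    |>.eq_formalMultilinearSeries_of_eventually
      (hasFPowerSeriesOnBall_coeffMap hc y).hasFPowerSeriesAt
      (h.eventuallyEq_of_mem (ball_mem_nhds 0 one_pos))
  refine sub_eq_zero.1 (htotal _ fun n => ?_)
  rw [map_sub, sub_eq_zero]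
  exact ContinuousMultilinearMap.mkPiRing_eq_iff.1 (congrFun hseries n)

lemma coeffMap_neg_of_even_coeff_eq_zero (hc : 1 ≤ (coeffSeries c).radius) {x : E}
    (hx : ∀ n, Even n → c n x = 0) {z : 𝕜} (hz : z ∈ ball 0 1) :
    coeffMap c x (-z) = -coeffMap c x z := by
  refine (hasSum_coeffMap hc x (by simpa using hz)).unique
    ((hasSum_coeffMap hc x hz).neg.congr_fun fun n => ?_)
  rcases Nat.even_or_odd n with hn | hn
  · simp [hx n hn]
  · simp [hn.neg_pow]

variable {v : ℕ → E}

lemma coeffMap_eq_pow (hc : 1 ≤ (coeffSeries c).radius)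
    (hcv : ∀ m n, c m (v n) = if m = n then 1 else 0) (n : ℕ) {z : 𝕜} (hz : z ∈ ball 0 1) :
    coeffMap c (v n) z = z ^ n := by
  refine (hasSum_coeffMap hc (v n) hz).unique ?_
  have hsum := hasSum_single (f := fun m => c m (v n) * z ^ m) n fun m hm => by simp [hcv, hm]
  simpa [hcv] using hsum

lemma coeffMap_constr_eq_eval (hc : 1 ≤ (coeffSeries c).radius)
    (hcv : ∀ m n, c m (v n) = if m = n then 1 else 0) (p : 𝕜[X]) {z : 𝕜} (hz : z ∈ ball 0 1) :
    coeffMap c ((basisMonomials 𝕜).constr 𝕜 v p) z = p.eval z := by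
  suffices h : (LinearMap.proj z ∘ₗ coeffMap c) ∘ₗ (basisMonomials 𝕜).constr 𝕜 v = leval z from
    LinearMap.congr_fun h p
  refine (basisMonomials 𝕜).ext fun n => ?_
  rw [LinearMap.comp_apply, Module.Basis.constr_basis]
  simp [coeffMap_eq_pow hc hcv n hz]

lemma dense_setOf_coeffMap_eq_eval (hc : 1 ≤ (coeffSeries c).radius)
    (hcv : ∀ m n, c m (v n) = if m = n then 1 else 0)
    (hv : Dense (Submodule.span 𝕜 (Set.range v) : Set E)) :
    Dense {x | ∃ p : 𝕜[X], ∀ z ∈ ball (0 : 𝕜) 1, coeffMap c x z = p.eval z} := by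
  rw [← (basisMonomials 𝕜).constr_range 𝕜] at hv
  refine hv.mono ?_
  rintro _ ⟨p, rfl⟩
  exact ⟨p, fun z hz => coeffMap_constr_eq_eval hc hcv p hz⟩

lemma notMem_closure_setOf_coeffMap_eq_eval (hc : 1 ≤ (coeffSeries c).radius)
    (htotal : ∀ x, (∀ n, c n x = 0) → x = 0) (hcv : ∀ m n, c m (v n) = if m = n then 1 else 0)
    {s : Set ℕ} {ψ : StrongDual 𝕜 E} (hψ : ∀ n ∉ s, ψ (v n) = 0) {x : E} (hx : ψ x ≠ 0) :
    x ∉ closure {y | ∃ p : 𝕜[X], (∀ n ∈ s, p.coeff n = 0) ∧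
      ∀ z ∈ ball (0 : 𝕜) 1, coeffMap c y z = p.eval z} := by
  refine fun hmem => hx (closure_minimal ?_ ψ.isClosed_ker hmem)
  rintro y ⟨p, hp, hy⟩
  obtain rfl : y = (basisMonomials 𝕜).constr 𝕜 v p := eq_of_eqOn_coeffMap hc htotal fun z hz => by
    rw [hy z hz, coeffMap_constr_eq_eval hc hcv p hz]
  change ψ ((basisMonomials 𝕜).constr 𝕜 v p) = 0
  rw [Module.Basis.constr_apply, Finsupp.sum, map_sum]
  refine Finset.sum_eq_zero fun n _ => ?_
  have hrepr : (basisMonomials 𝕜).repr p n = p.coeff n := rfl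
  by_cases hn : n ∈ s
  · rw [hrepr, hp n hn, zero_smul, map_zero]
  · rw [map_smul, hψ n hn, smul_zero]

end CoeffMap

section CoupledVector

variable {𝕜 E : Type*} [RCLike 𝕜] [NormedAddCommGroup E] [InnerProductSpace 𝕜 E]
  (b : HilbertBasis (Option ℕ) 𝕜 E) (s : Set ℕ) [DecidablePred (· ∈ s)]

/-- An orthonormal sequence `e k = b (some k)`, coupled at the indices in `s` to one further unit
vector `f = b none`. The subtracted sum makes the sequences for `s` and `sᶜ` biorthogonal. -/
noncomputable def coupledVector (n : ℕ) : E :=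
  if n ∈ s then b (some n) + b none - ∑ k ∈ Finset.range n with k ∉ s, b (some k)
  else b (some n)

lemma inner_none_coupledVector (n : ℕ) :
    ⟪b none, coupledVector b s n⟫_𝕜 = if n ∈ s then 1 else 0 := by
  unfold coupledVector
  have hb := orthonormal_iff_ite.1 b.orthonormal
  split_ifs <;> simp [inner_sub_right, inner_add_right, inner_sum, hb, -inner_self_eq_norm_sq_to_K]

lemma inner_some_coupledVector (k n : ℕ) : ⟪b (some k), coupledVector b s n⟫_𝕜 =
    (if k = n then 1 else 0) - if n ∈ s ∧ k ∉ s ∧ k < n then 1 else 0 := by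
  unfold coupledVector
  have hb := orthonormal_iff_ite.1 b.orthonormal
  by_cases hn : n ∈ s
  · simp [hn, inner_sub_right, inner_add_right, inner_sum, hb, -inner_self_eq_norm_sq_to_K,
      and_comm]
  · simp [hn, hb, -inner_self_eq_norm_sq_to_K]

lemma inner_coupledVector_compl (m n : ℕ) :
    ⟪coupledVector b sᶜ m, coupledVector b s n⟫_𝕜 = if m = n then 1 else 0 := by
  by_cases hm : m ∈ s
  · rw [coupledVector, if_neg (by simpa using hm), inner_some_coupledVector]
    simp [hm]
  · rw [coupledVector, if_pos (by simpa using hm), inner_sub_left, inner_add_left, sum_inner]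
    have hsum : ∑ j ∈ Finset.range m with j ∉ sᶜ, ⟪b (some j), coupledVector b s n⟫_𝕜 =
        if n < m ∧ n ∈ s then 1 else 0 := by
      have hterm : ∀ j ∈ {j ∈ Finset.range m | j ∉ sᶜ},
          ⟪b (some j), coupledVector b s n⟫_𝕜 = if j = n then 1 else 0 := by
        simp +contextual [inner_some_coupledVector]
      rw [Finset.sum_congr rfl hterm]
      simp
    rw [hsum, inner_some_coupledVector, inner_none_coupledVector]
    by_cases hn : n ∈ s
    · have hne : m ≠ n := fun hmn => hm (hmn ▸ hn)
      rcases hne.lt_or_gt with hmn | hmn <;> simp [hm, hn, hne, hmn, hmn.not_gt]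
    · simp [hn]

lemma norm_coupledVector_le (n : ℕ) : ‖coupledVector b s n‖ ≤ n + 2 := by
  have hb (i : Option ℕ) : ‖b i‖ = 1 := b.orthonormal.norm_eq_one i
  unfold coupledVector
  split_ifs
  · have hsum : ‖∑ k ∈ Finset.range n with k ∉ s, b (some k)‖ ≤ n :=
      calc ‖∑ k ∈ Finset.range n with k ∉ s, b (some k)‖
          ≤ ∑ k ∈ Finset.range n with k ∉ s, 1 := norm_sum_le_of_le _ fun k _ => (hb (some k)).le
        _ ≤ n := by
          simpa using Finset.card_filter_le (Finset.range n) (· ∉ s)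
    calc ‖b (some n) + b none - ∑ k ∈ Finset.range n with k ∉ s, b (some k)‖
        ≤ ‖b (some n)‖ + ‖b none‖ + ‖∑ k ∈ Finset.range n with k ∉ s, b (some k)‖ :=
          (norm_sub_le _ _).trans (by gcongr; exact norm_add_le _ _)
      _ ≤ n + 2 := by rw [hb, hb]; linarith
  · rw [hb]
    linarith [n.cast_nonneg (α := ℝ)]

lemma norm_coupledVector_pos (n : ℕ) : 0 < ‖coupledVector b s n‖ := by
  refine norm_pos_iff.2 fun h => ?_
  simpa [h] using inner_coupledVector_compl b s n n

variable {s} in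
lemma eq_zero_of_inner_coupledVector_eq_zero (hs : s.Infinite) {x : E}
    (hx : ∀ n, ⟪coupledVector b s n, x⟫_𝕜 = 0) : x = 0 := by
  have hcompl : ∀ n ∉ s, ⟪b (some n), x⟫_𝕜 = 0 := fun n hn => by
    simpa [coupledVector, hn] using hx n
  have hmem : ∀ n ∈ s, ⟪b (some n), x⟫_𝕜 = -⟪b none, x⟫_𝕜 := fun n hn => by
    have hn0 := hx n
    rw [coupledVector, if_pos hn, inner_sub_left, inner_add_left, sum_inner,
      Finset.sum_eq_zero fun k hk => hcompl k (Finset.mem_filter.1 hk).2, sub_zero] at hn0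
    exact eq_neg_of_add_eq_zero_left hn0
  have hnone : ⟪b none, x⟫_𝕜 = 0 := by
    have htendsto : Tendsto (fun n => ‖⟪b (some n), x⟫_𝕜‖ ^ 2) cofinite (nhds 0) :=
      ((b.orthonormal.comp _ (Option.some_injective ℕ)).inner_products_summable x
        ).tendsto_cofinite_zero
    have hfreq : ∃ᶠ n in cofinite, ‖⟪b (some n), x⟫_𝕜‖ ^ 2 = ‖⟪b none, x⟫_𝕜‖ ^ 2 :=
      (frequently_cofinite_mem_iff_infinite.2 hs).mono fun n hn => by rw [hmem n hn, norm_neg]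
    have hzero : (0 : ℝ) = ‖⟪b none, x⟫_𝕜‖ ^ 2 :=
      isClosed_singleton.mem_of_frequently_of_tendsto hfreq htendsto
    simpa using hzero.symm
  suffices hrepr : b.repr x = 0 from b.repr.toLinearEquiv.map_eq_zero_iff.1 hrepr
  ext (_ | n)
  · simpa [b.repr_apply_apply] using hnone
  · by_cases hn : n ∈ s <;> simp [b.repr_apply_apply, hcompl, hmem, hn, hnone]

end CoupledVector

section MonomialVector

variable {𝕜 E : Type*} [RCLike 𝕜] [NormedAddCommGroup E] [InnerProductSpace 𝕜 E]
  (b : HilbertBasis (Option ℕ) 𝕜 E) (s : Set ℕ) [DecidablePred (· ∈ s)] {w : ℕ → ℝ}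

/-- The multiple of `coupledVector b s n` of norm `w n`; it represents the monomial `zⁿ` of norm
`w n` in the function space on `E`. -/
noncomputable def monomialVector (w : ℕ → ℝ) (n : ℕ) : E :=
  ((w n / ‖coupledVector b s n‖ : ℝ) : 𝕜) • coupledVector b s n

/-- The functional reading off the `n`-th Taylor coefficient in the function space on `E` whose
monomials are represented by `monomialVector b s w`, to which these functionals are biorthogonal. -/
noncomputable def coeffFunctional (w : ℕ → ℝ) (n : ℕ) : StrongDual 𝕜 E :=
  ((‖coupledVector b s n‖ / w n : ℝ) : 𝕜) • innerSL 𝕜 (coupledVector b sᶜ n)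

lemma norm_monomialVector {n : ℕ} (hw : 0 < w n) : ‖monomialVector b s w n‖ = w n := by
  have hpos := norm_coupledVector_pos b s n
  rw [monomialVector, norm_smul, RCLike.norm_ofReal, abs_of_pos (div_pos hw hpos),
    div_mul_cancel₀ _ hpos.ne']

lemma coeffFunctional_monomialVector (hw : ∀ n, 0 < w n) (m n : ℕ) :
    coeffFunctional b s w m (monomialVector b s w n) = if m = n then 1 else 0 := by
  simp only [coeffFunctional, monomialVector, smul_apply, map_smul,
    innerSL_apply_apply, inner_coupledVector_compl, smul_eq_mul]
  split_ifs with hmn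
  · subst hmn
    rw [mul_one, ← RCLike.ofReal_mul, div_mul_div_cancel₀ (norm_coupledVector_pos b s m).ne',
      div_self (hw m).ne', RCLike.ofReal_one]
  · simp

lemma dense_span_range_monomialVector [CompleteSpace E] (hs : s.Infinite) (hw : ∀ n, 0 < w n) :
    Dense (Submodule.span 𝕜 (Set.range (monomialVector b s w)) : Set E) := by
  rw [Submodule.dense_iff_topologicalClosure_eq_top, Submodule.topologicalClosure_eq_top_iff,
    Submodule.eq_bot_iff]
  refine fun x hx => eq_zero_of_inner_coupledVector_eq_zero b hs fun n => ?_
  have hn := (Submodule.mem_orthogonal _ _).1 hx _ (Submodule.subset_span ⟨n, rfl⟩)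
  rw [monomialVector, inner_smul_left] at hn
  simpa [(hw n).ne', (norm_coupledVector_pos b s n).ne'] using hn

variable {s} in
lemma eq_zero_of_coeffFunctional_eq_zero (hs : sᶜ.Infinite) (hw : ∀ n, 0 < w n) {x : E}
    (hx : ∀ n, coeffFunctional b s w n x = 0) : x = 0 := by
  refine eq_zero_of_inner_coupledVector_eq_zero b hs fun n => ?_
  simpa [coeffFunctional, (hw n).ne', (norm_coupledVector_pos b s n).ne'] using hx n

lemma one_le_radius_coeffSeries_coeffFunctional (hw : ∀ n, 0 < w n)
    (hgrowth : ∀ r ∈ Set.Ioo (0 : ℝ) 1, (fun n => r ^ n) =O[atTop] w) :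
    1 ≤ (coeffSeries (coeffFunctional b s w)).radius := by
  refine one_le_radius_coeffSeries (k := 2) hw hgrowth (.of_bound 9 ?_)
  filter_upwards [eventually_ge_atTop 1] with n hn
  have hn_cast : (1 : ℝ) ≤ n := by exact_mod_cast hn
  calc ‖‖coeffFunctional b s w n‖ * w n‖
      = ‖coupledVector b s n‖ * ‖coupledVector b sᶜ n‖ := by
        rw [coeffFunctional, norm_smul, RCLike.norm_ofReal, innerSL_apply_norm, abs_div, abs_norm,
          abs_of_pos (hw n), mul_right_comm, div_mul_cancel₀ _ (hw n).ne',
          Real.norm_of_nonneg (by positivity)]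
    _ ≤ (n + 2) * (n + 2) := by
        gcongr <;> exact norm_coupledVector_le b _ n
    _ ≤ 9 * ‖(n : ℝ) ^ 2‖ := by
        rw [Real.norm_of_nonneg (by positivity)]
        nlinarith

variable {s} {n : ℕ}

lemma coeffFunctional_none (hn : n ∈ s) : coeffFunctional b s w n (b none) = 0 := by
  simp [coeffFunctional, ← inner_conj_symm _ (b none), inner_none_coupledVector, hn]

lemma inner_none_monomialVector (hn : n ∉ s) : ⟪b none, monomialVector b s w n⟫_𝕜 = 0 := by
  simp [monomialVector, inner_smul_right, inner_none_coupledVector, hn]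

end MonomialVector

lemma isBigO_pow_of_one_le {w : ℕ → ℝ} (hw : ∀ n, 1 ≤ w n) {r : ℝ} (hr : r ∈ Set.Icc 0 1) :
    (fun n => r ^ n) =O[atTop] w :=
  .of_norm_le fun n => by
    rw [Real.norm_of_nonneg (pow_nonneg hr.1 n)]
    exact (pow_le_one₀ hr.1 hr.2).trans (hw n)

theorem stmt14_general (w : ℕ → ℝ) (hw : ∀ n, 0 < w n)
    (hgrowth : ∀ r ∈ Set.Ioo (0 : ℝ) 1, (fun n => r ^ n) =O[atTop] w) :
    ∃ (H : Type) (_ : NormedAddCommGroup H) (_ : InnerProductSpace ℂ H) (_ : CompleteSpace H)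
      (ι : H →ₗ[ℂ] (ℂ → ℂ)),
      (∀ h : H, DifferentiableOn ℂ (ι h) (ball (0 : ℂ) 1)) ∧
      (∀ h₁ h₂ : H, (∀ z ∈ ball (0 : ℂ) 1, ι h₁ z = ι h₂ z) → h₁ = h₂) ∧
      (∀ K : Set ℂ, IsCompact K → K ⊆ ball (0 : ℂ) 1 →
        ∃ C : ℝ, ∀ h : H, ∀ z ∈ K, ‖ι h z‖ ≤ C * ‖h‖) ∧
      (∀ p : ℂ[X], ∃ h : H, ∀ z ∈ ball (0 : ℂ) 1, ι h z = p.eval z) ∧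
      Dense {h : H | ∃ p : ℂ[X], ∀ z ∈ ball (0 : ℂ) 1, ι h z = p.eval z} ∧
      (∃ f : H, (∀ z ∈ ball (0 : ℂ) 1, ι f (-z) = -(ι f z)) ∧
        f ∉ closure {h : H | ∃ p : ℂ[X],
          (∀ k, p.coeff (2 * k) = 0) ∧ ∀ z ∈ ball (0 : ℂ) 1, ι h z = p.eval z}) ∧
      (∀ n : ℕ, ∃ h : H, (∀ z ∈ ball (0 : ℂ) 1, ι h z = z ^ n) ∧ ‖h‖ = w n) := by
  let b : HilbertBasis (Option ℕ) ℂ (lp (fun _ : Option ℕ => ℂ) 2) := default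
  let s : Set ℕ := {n | Even n}
  have hs : s.Infinite := Nat.frequently_atTop_iff_infinite.1 Nat.frequently_even
  have hs_compl : sᶜ.Infinite :=
    Nat.frequently_atTop_iff_infinite.1 (Nat.frequently_odd.mono fun _ => Nat.not_even_iff_odd.2)
  have hc := one_le_radius_coeffSeries_coeffFunctional b s hw hgrowth
  have hcv := coeffFunctional_monomialVector b s hw
  have htotal (x) (hx : ∀ n, coeffFunctional b s w n x = 0) : x = 0 :=
    eq_zero_of_coeffFunctional_eq_zero b hs_compl hw hx
  have hodd : b none ∉ closure _ := notMem_closure_setOf_coeffMap_eq_eval hc htotal hcv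
    (s := s) (ψ := innerSL ℂ (b none)) (fun n hn => inner_none_monomialVector b hn)
    (by simp [b.orthonormal.norm_eq_one])
  refine ⟨_, inferInstance, inferInstance, inferInstance, coeffMap (coeffFunctional b s w),
    differentiableOn_coeffMap hc, fun _ _ => eq_of_eqOn_coeffMap hc htotal,
    fun _ => exists_norm_coeffMap_le hc,
    fun p => ⟨_, fun z hz => coeffMap_constr_eq_eval hc hcv p hz⟩,
    dense_setOf_coeffMap_eq_eval hc hcv (dense_span_range_monomialVector b s hs hw),
    ⟨b none, fun z hz => coeffMap_neg_of_even_coeff_eq_zero hc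
      (fun n hn => coeffFunctional_none b hn) hz, ?_⟩,
    fun n => ⟨_, fun z hz => coeffMap_eq_pow hc hcv n hz, norm_monomialVector b s (hw n)⟩⟩
  simpa [s, even_iff_exists_two_mul] using hodd

/-- There is a Hilbert holomorphic function space on the unit disk containing the polynomials
densely, in which the odd polynomials are not dense in the odd functions; moreover the
monomial norms can be made to satisfy `‖zⁿ‖ ≤ 1 + ωₙ` whenever `Σ 1/ωₙ < ∞`. -/
theorem stmt14 (ω : ℕ → ℝ) (hω : ∀ n, 0 < ω n) (hsum : Summable fun n => 1 / ω n) :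
    ∃ (H : Type) (_ : NormedAddCommGroup H) (_ : InnerProductSpace ℂ H) (_ : CompleteSpace H)
      (ι : H →ₗ[ℂ] (ℂ → ℂ)),
      -- H consists of holomorphic functions on the disk
      (∀ h : H, DifferentiableOn ℂ (ι h) (ball (0 : ℂ) 1)) ∧
      -- the embedding is injective (as functions on the disk)
      (∀ h₁ h₂ : H, (∀ z ∈ ball (0 : ℂ) 1, ι h₁ z = ι h₂ z) → h₁ = h₂) ∧
      -- the inclusion into Hol(𝔻) is continuous (uniform bounds on compact subsets)
      (∀ K : Set ℂ, IsCompact K → K ⊆ ball (0 : ℂ) 1 →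
        ∃ C : ℝ, ∀ h : H, ∀ z ∈ K, ‖ι h z‖ ≤ C * ‖h‖) ∧
      -- H contains the polynomials
      (∀ p : Polynomial ℂ, ∃ h : H, ∀ z ∈ ball (0 : ℂ) 1, ι h z = p.eval z) ∧
      -- the polynomials are dense in H
      Dense {h : H | ∃ p : Polynomial ℂ, ∀ z ∈ ball (0 : ℂ) 1, ι h z = p.eval z} ∧
      -- the odd polynomials are not dense in the odd functions of H
      (∃ f : H, (∀ z ∈ ball (0 : ℂ) 1, ι f (-z) = -(ι f z)) ∧
        f ∉ closure {h : H | ∃ p : Polynomial ℂ,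
          (∀ k, p.coeff (2 * k) = 0) ∧ ∀ z ∈ ball (0 : ℂ) 1, ι h z = p.eval z}) ∧
      -- the monomial norm estimates
      (∀ n : ℕ, ∃ h : H, (∀ z ∈ ball (0 : ℂ) 1, ι h z = z ^ n) ∧ ‖h‖ ≤ 1 + ω n) := by
  obtain ⟨H, i₁, i₂, i₃, ι, hol, inj, cont, poly, dense, odd, norm⟩ := stmt14_general
    (fun n => 1 + ω n) (fun n => by linarith [hω n]) fun r hr =>
      isBigO_pow_of_one_le (fun n => by linarith [hω n]) (Set.Ioo_subset_Icc_self hr)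
  exact ⟨H, i₁, i₂, i₃, ι, hol, inj, cont, poly, dense, odd,
    fun n => (norm n).imp fun _ h => ⟨h.1, h.2.le⟩⟩
end

section
/- There exists a Hilbert holomorphic function space H on the unit disk in which the polynomials are dense, and a function f ∈ H, such that f does not lie in the closed linear span of its radial dilates {f_r : 0 < r < 1}, where f_r(z) := f(rz). -/
open Metric

/-!
Let `c, d : ℕ → ℂ` be sequences with `c n * d n = 0`, neither of them square summable, and let
`f = ∑ c k z ^ k`. Declare `f` together with `b n = z ^ n - d n * ∑ k > n, c k z ^ k` (`n : ℕ`) to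
be an orthonormal basis. Since `c k * d k = 0`, we have `c k • b k = c k z ^ k`, so the dilate
`f_r = ∑ r ^ k c k z ^ k` is `∑ r ^ k c k • b k`, which is orthogonal to `f`. On the other hand
`z ^ n = b n + d n • (f - ∑ k ≤ n, c k • b k)` belongs to the space. The non-summability of `c`
makes the coordinates of a function unique, and that of `d` makes the polynomials dense.
-/

namespace DiscSpace

open Finset Polynomial

section SummableOnDisc

variable {E F : Type*} [SeminormedAddCommGroup E] [SeminormedAddCommGroup F]

/-- `a` is the Taylor coefficient sequence of a function on the unit disc: the power series
`∑ a n z ^ n` converges absolutely for `‖z‖ < 1`. -/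
def SummableOnDisc (a : ℕ → E) : Prop :=
  ∀ ρ : ℝ, 0 ≤ ρ → ρ < 1 → Summable fun n ↦ ‖a n‖ * ρ ^ n

theorem SummableOnDisc.of_norm_le_mul {a : ℕ → E} {b : ℕ → F} (hb : SummableOnDisc b) {C : ℝ}
    (hab : ∀ n, ‖a n‖ ≤ C * ‖b n‖) : SummableOnDisc a := by
  intro ρ hρ₀ hρ₁
  refine ((hb ρ hρ₀ hρ₁).mul_left C).of_nonneg_of_le (fun n ↦ by positivity) fun n ↦ ?_
  rw [← mul_assoc]
  gcongr
  exact hab n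

theorem summableOnDisc_const (x : E) : SummableOnDisc fun _ ↦ x :=
  fun _ hρ₀ hρ₁ ↦ (summable_geometric_of_lt_one hρ₀ hρ₁).mul_left ‖x‖

theorem SummableOnDisc.add {a b : ℕ → E} (ha : SummableOnDisc a) (hb : SummableOnDisc b) :
    SummableOnDisc (a + b) := by
  intro ρ hρ₀ hρ₁
  refine ((ha ρ hρ₀ hρ₁).add (hb ρ hρ₀ hρ₁)).of_nonneg_of_le (fun n ↦ by positivity) fun n ↦ ?_
  rw [← add_mul]
  gcongr
  exact norm_add_le _ _

theorem SummableOnDisc.norm {a : ℕ → E} (ha : SummableOnDisc a) : SummableOnDisc fun n ↦ ‖a n‖ :=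
  ha.of_norm_le_mul (C := 1) fun _ ↦ by simp

theorem SummableOnDisc.indicator {a : ℕ → E} (ha : SummableOnDisc a) (s : Set ℕ) :
    SummableOnDisc (s.indicator a) :=
  ha.of_norm_le_mul (C := 1) fun _ ↦ by
    rw [one_mul]
    exact norm_indicator_le_norm_self _ _

theorem SummableOnDisc.norm_mul_sum_norm {a : ℕ → E} {b : ℕ → F} (ha : SummableOnDisc a)
    (hb : SummableOnDisc b) : SummableOnDisc fun n ↦ ‖a n‖ * ∑ j ∈ range n, ‖b j‖ := by
  intro ρ hρ₀ hρ₁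
  -- Half of the decay `ρ ^ n = σ ^ n * σ ^ n` is spent on each of the two factors.
  set σ := √ρ
  have hσ₀ : 0 ≤ σ := Real.sqrt_nonneg ρ
  have hσ₁ : σ < 1 := by rwa [Real.sqrt_lt' one_pos, one_pow]
  have hρ : ρ = σ * σ := (Real.mul_self_sqrt hρ₀).symm
  have hsum (n : ℕ) : (∑ j ∈ range n, ‖b j‖) * σ ^ n ≤ ∑' j, ‖b j‖ * σ ^ j := calc
    (∑ j ∈ range n, ‖b j‖) * σ ^ n ≤ ∑ j ∈ range n, ‖b j‖ * σ ^ j := by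
      rw [sum_mul]
      refine sum_le_sum fun j hj ↦ mul_le_mul_of_nonneg_left ?_ (norm_nonneg _)
      exact pow_le_pow_of_le_one hσ₀ hσ₁.le (mem_range.mp hj).le
    _ ≤ ∑' j, ‖b j‖ * σ ^ j :=
      (hb σ hσ₀ hσ₁).sum_le_tsum _ fun j _ ↦ by positivity
  refine ((ha σ hσ₀ hσ₁).mul_right (∑' j, ‖b j‖ * σ ^ j)).of_nonneg_of_le
    (fun n ↦ by positivity) fun n ↦ ?_
  rw [Real.norm_of_nonneg (by positivity)]
  calc ‖a n‖ * (∑ j ∈ range n, ‖b j‖) * ρ ^ n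
      = ‖a n‖ * σ ^ n * ((∑ j ∈ range n, ‖b j‖) * σ ^ n) := by rw [hρ, mul_pow]; ring
    _ ≤ ‖a n‖ * σ ^ n * ∑' j, ‖b j‖ * σ ^ j := by gcongr; exact hsum n

theorem SummableOnDisc.memℓp_mul_pow {a : ℕ → ℂ} (ha : SummableOnDisc a) {r : ℂ}
    (hr : ‖r‖ < 1) {p : ENNReal} (hp : 1 ≤ p) : Memℓp (fun n ↦ a n * r ^ n) p := by
  have hone : Memℓp (fun n ↦ a n * r ^ n) 1 :=
    memℓp_gen (by simpa using ha ‖r‖ (norm_nonneg r) hr)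
  exact hone.of_exponent_ge hp

theorem SummableOnDisc.summable_mul_pow {a : ℕ → ℂ} (ha : SummableOnDisc a) {z : ℂ}
    (hz : z ∈ ball 0 1) : Summable fun n ↦ a n * z ^ n := by
  refine Summable.of_norm ?_
  simpa only [norm_mul, norm_pow] using ha ‖z‖ (norm_nonneg z) (mem_ball_zero_iff.mp hz)

end SummableOnDisc

section DiscSum

theorem eball_one {X : Type*} [PseudoMetricSpace X] (x : X) : eball x 1 = ball x 1 := by
  rw [← ENNReal.ofReal_one, eball_ofReal]

/-- The space of Taylor coefficient sequences of holomorphic functions on the unit disc. -/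
def discSequences : Submodule ℂ (ℕ → ℂ) where
  carrier := {a | SummableOnDisc a}
  add_mem' := SummableOnDisc.add
  zero_mem' := summableOnDisc_const 0
  smul_mem' r _ ha := ha.of_norm_le_mul (C := ‖r‖) fun _ ↦ (norm_mul r _).le

/-- The function on the unit disc with given Taylor coefficients, as a linear map. It is extended
by `0` off the disc, because the junk value of a divergent sum is not linear in `a`. -/
noncomputable def discSum : discSequences →ₗ[ℂ] ℂ → ℂ where
  toFun a := (ball 0 1).indicator fun z ↦ ∑' n, a.1 n * z ^ n
  map_add' a b := by
    rw [← Set.indicator_add']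
    refine Set.indicator_congr fun z hz ↦ ?_
    simp only [Submodule.coe_add, Pi.add_apply, add_mul]
    exact (a.2.summable_mul_pow hz).tsum_add (b.2.summable_mul_pow hz)
  map_smul' r a := by
    refine .trans (Set.indicator_congr fun z _ ↦ ?_) (Set.indicator_const_smul _ r _)
    simp only [Submodule.coe_smul, Pi.smul_apply, smul_eq_mul, mul_assoc, tsum_mul_left]

theorem discSum_apply (a : discSequences) {z : ℂ} (hz : z ∈ ball 0 1) :
    discSum a z = ∑' n, a.1 n * z ^ n :=
  Set.indicator_of_mem hz fun z ↦ ∑' n, a.1 n * z ^ n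

theorem SummableOnDisc.one_le_radius {a : ℕ → ℂ} (ha : SummableOnDisc a) :
    1 ≤ (FormalMultilinearSeries.ofScalars ℂ a).radius := by
  refine ENNReal.le_of_forall_nnreal_lt fun r hr ↦ ?_
  refine FormalMultilinearSeries.le_radius_of_summable_norm _ ?_
  simpa only [FormalMultilinearSeries.ofScalars_norm] using ha r r.2 (by exact_mod_cast hr)

theorem hasFPowerSeriesOnBall_discSum (a : discSequences) :
    HasFPowerSeriesOnBall (discSum a) (FormalMultilinearSeries.ofScalars ℂ a.1) 0 1 := by
  have hr := SummableOnDisc.one_le_radius a.2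
  refine ((FormalMultilinearSeries.hasFPowerSeriesOnBall _
    (one_pos.trans_le hr)).mono one_pos hr).congr fun z hz ↦ ?_
  rw [eball_one] at hz
  rw [discSum_apply a hz]
  exact FormalMultilinearSeries.ofScalars_sum_eq a.1 z

theorem differentiableOn_discSum (a : discSequences) :
    DifferentiableOn ℂ (discSum a) (ball 0 1) := by
  simpa only [eball_one] using (hasFPowerSeriesOnBall_discSum a).differentiableOn

theorem eq_zero_of_discSum_eqOn_zero {a : discSequences}
    (ha : Set.EqOn (discSum a) 0 (ball 0 1)) : a = 0 := by
  have hzero : ∀ᶠ z in nhds 0, discSum a z = 0 := ha.eventuallyEq_of_mem (ball_mem_nhds 0 one_pos)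
  have hseries := ((hasFPowerSeriesOnBall_discSum a).hasFPowerSeriesAt.congr hzero).eq_zero
  exact Subtype.ext (FormalMultilinearSeries.ofScalars_series_eq_zero ℂ |>.mp hseries)

theorem discSum_of_dilate {a b : discSequences} {r : ℂ} (hr : ‖r‖ ≤ 1)
    (hab : ∀ n, b.1 n = r ^ n * a.1 n) {z : ℂ} (hz : z ∈ ball 0 1) :
    discSum b z = discSum a (r * z) := by
  have hrz : r * z ∈ ball 0 1 := by
    rw [mem_ball_zero_iff, norm_mul]
    exact (mul_le_of_le_one_left (norm_nonneg z) hr).trans_lt (mem_ball_zero_iff.mp hz)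
  rw [discSum_apply b hz, discSum_apply a hrz]
  refine tsum_congr fun n ↦ ?_
  rw [hab, mul_pow]
  ring

theorem norm_discSum_le {a : discSequences} {w : ℕ → ℝ} (hw : SummableOnDisc w) {C ρ : ℝ}
    (hC : 0 ≤ C) (ha : ∀ n, ‖a.1 n‖ ≤ C * ‖w n‖) (hρ₀ : 0 ≤ ρ) (hρ₁ : ρ < 1)
    {z : ℂ} (hz : ‖z‖ ≤ ρ) : ‖discSum a z‖ ≤ C * ∑' n, ‖w n‖ * ρ ^ n := by
  rw [discSum_apply a (mem_ball_zero_iff.mpr (hz.trans_lt hρ₁))]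
  refine tsum_of_norm_bounded ((hw ρ hρ₀ hρ₁).hasSum.mul_left C) fun n ↦ ?_
  rw [norm_mul, norm_pow, ← mul_assoc]
  gcongr
  exact ha n

end DiscSum

section Memℓp

variable {α β E : Type*} [NormedAddCommGroup E] {p : ENNReal}

theorem memℓp_comp_of_injective (hp : 0 < p.toReal) {x : β → E} (hx : Memℓp x p) {φ : α → β}
    (hφ : φ.Injective) : Memℓp (fun i ↦ x (φ i)) p :=
  memℓp_gen ((hx.summable hp).comp_injective hφ)

theorem memℓp_option_elim_zero (hp : 0 < p.toReal) {x : α → E} (hx : Memℓp x p) :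
    Memℓp (fun i : Option α ↦ i.elim 0 x) p := by
  refine memℓp_gen (((Option.some_injective α).summable_iff fun i hi ↦ ?_).mp (hx.summable hp))
  cases i with
  | none => simp [hp.ne']
  | some i => exact absurd (Set.mem_range_self i) hi

theorem not_memℓp_indicator_one (hp : 0 < p.toReal) {s : Set α} (hs : s.Infinite) :
    ¬Memℓp (s.indicator (1 : α → ℂ)) p := by
  intro hmem
  have hlt := (hmem.summable hp).tendsto_cofinite_zero.eventually_lt_const one_pos
  refine hs (Set.Finite.subset hlt fun i hi ↦ ?_)
  simp [hi]

end Memℓp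

theorem notMem_topologicalClosure_span_of_forall_inner_eq_zero {𝕜 V : Type*} [RCLike 𝕜]
    [NormedAddCommGroup V] [InnerProductSpace 𝕜 V] {x : V} (hx : x ≠ 0) {s : Set V}
    (hs : ∀ y ∈ s, inner 𝕜 x y = 0) : x ∉ (Submodule.span 𝕜 s).topologicalClosure := by
  have hle : (Submodule.span 𝕜 s).topologicalClosure ≤ (𝕜 ∙ x)ᗮ :=
    Submodule.topologicalClosure_minimal _
      (Submodule.span_le.mpr fun y hy ↦
        Submodule.mem_orthogonal_singleton_iff_inner_right.mpr (hs y hy))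
      (Submodule.isClosed_orthogonal _)
  exact fun hmem ↦ hx <| inner_self_eq_zero.mp <|
    Submodule.mem_orthogonal_singleton_iff_inner_right.mp (hle hmem)

section CoordSpace

/-- The Hilbert space of coordinates with respect to the orthonormal basis consisting of
`f = ∑ c k z ^ k` (index `none`) and `b n = z ^ n - d n * ∑ k > n, c k z ^ k` (index `some n`). -/
abbrev CoordSpace : Type := lp (fun _ : Option ℕ ↦ ℂ) 2

variable (c d : ℕ → ℂ)

/-- The Taylor coefficients of the function with coordinates `h`. -/
noncomputable def taylorCoeff : CoordSpace →ₗ[ℂ] ℕ → ℂ where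
  toFun h n := h (some n) + c n * (h none - ∑ j ∈ range n, d j * h (some j))
  map_add' h k := by
    ext n
    simp only [lp.coeFn_add, Pi.add_apply, mul_add, sum_add_distrib]
    ring
  map_smul' r h := by
    ext n
    simp only [lp.coeFn_smul, Pi.smul_apply, smul_eq_mul, RingHom.id_apply, mul_left_comm _ r,
      ← mul_sum]
    ring

theorem taylorCoeff_apply (h : CoordSpace) (n : ℕ) : taylorCoeff c d h n =
    h (some n) + c n * (h none - ∑ j ∈ range n, d j * h (some j)) := rfl

/-- The bound on the `n`-th Taylor coefficient over the unit ball of `CoordSpace`. -/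
noncomputable def taylorWeight (n : ℕ) : ℝ :=
  1 + ‖c n‖ + ‖c n‖ * ∑ j ∈ range n, ‖d j‖

variable {c d}

theorem summableOnDisc_taylorWeight (hc : SummableOnDisc c) (hd : SummableOnDisc d) :
    SummableOnDisc (taylorWeight c d) :=
  ((summableOnDisc_const 1).add hc.norm).add (hc.norm_mul_sum_norm hd)

theorem norm_taylorCoeff_le (h : CoordSpace) (n : ℕ) :
    ‖taylorCoeff c d h n‖ ≤ ‖h‖ * ‖taylorWeight c d n‖ := by
  have hsum : ‖∑ j ∈ range n, d j * h (some j)‖ ≤ (∑ j ∈ range n, ‖d j‖) * ‖h‖ := by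
    rw [sum_mul]
    refine norm_sum_le_of_le _ fun j _ ↦ ?_
    rw [norm_mul]
    gcongr
    exact lp.norm_apply_le_norm two_ne_zero h _
  have hw : 0 ≤ taylorWeight c d n := by unfold taylorWeight; positivity
  calc ‖taylorCoeff c d h n‖
      ≤ ‖h (some n)‖ + ‖c n‖ * (‖h none‖ + ‖∑ j ∈ range n, d j * h (some j)‖) := by
        refine (norm_add_le _ _).trans ?_
        rw [norm_mul]
        gcongr
        exact norm_sub_le _ _
    _ ≤ ‖h‖ + ‖c n‖ * (‖h‖ + (∑ j ∈ range n, ‖d j‖) * ‖h‖) := by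
        gcongr <;> exact lp.norm_apply_le_norm two_ne_zero h _
    _ = ‖h‖ * ‖taylorWeight c d n‖ := by rw [Real.norm_of_nonneg hw, taylorWeight]; ring

/-- The map `taylorCoeff`, with values in the space of Taylor coefficient sequences on which
`discSum` is defined. -/
noncomputable def taylorSequence (hc : SummableOnDisc c) (hd : SummableOnDisc d) :
    CoordSpace →ₗ[ℂ] discSequences :=
  (taylorCoeff c d).codRestrict discSequences fun h ↦
    (summableOnDisc_taylorWeight hc hd).of_norm_le_mul (norm_taylorCoeff_le h)

/-- The embedding of `CoordSpace` into the functions on the unit disc. -/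
noncomputable def inclusion (hc : SummableOnDisc c) (hd : SummableOnDisc d) :
    CoordSpace →ₗ[ℂ] ℂ → ℂ :=
  discSum ∘ₗ taylorSequence hc hd

variable (hc : SummableOnDisc c) (hd : SummableOnDisc d)

theorem inclusion_apply (h : CoordSpace) {z : ℂ} (hz : z ∈ ball 0 1) :
    inclusion hc hd h z = ∑' n, taylorCoeff c d h n * z ^ n :=
  discSum_apply _ hz

theorem differentiableOn_inclusion (h : CoordSpace) :
    DifferentiableOn ℂ (inclusion hc hd h) (ball 0 1) :=
  differentiableOn_discSum _

theorem exists_norm_inclusion_le {K : Set ℂ} (hK : IsCompact K) (hK₁ : K ⊆ ball 0 1) :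
    ∃ C : ℝ, ∀ h, ∀ z ∈ K, ‖inclusion hc hd h z‖ ≤ C * ‖h‖ := by
  obtain ⟨ρ, ⟨hρ₀, hρ₁⟩, hKρ⟩ := exists_pos_lt_subset_ball one_pos hK.isClosed hK₁
  refine ⟨∑' n, ‖taylorWeight c d n‖ * ρ ^ n, fun h z hz ↦ ?_⟩
  rw [mul_comm]
  exact norm_discSum_le (summableOnDisc_taylorWeight hc hd) (norm_nonneg h)
    (norm_taylorCoeff_le h) hρ₀.le hρ₁ (mem_ball_zero_iff.mp (hKρ hz)).le

/-- The basis vector of `CoordSpace` with index `i`. -/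
noncomputable def basisVector (i : Option ℕ) : CoordSpace :=
  lp.single 2 i 1

theorem basisVector_apply (i j : Option ℕ) : basisVector i j = if j = i then 1 else 0 :=
  Pi.single_apply i 1 j

theorem inner_basisVector_left (i : Option ℕ) (h : CoordSpace) :
    inner ℂ (basisVector i) h = h i := by
  simp [basisVector, lp.inner_single_left]

theorem eq_zero_of_apply_some_eq_mul {a : ℕ → ℂ} (ha : ¬Memℓp a 2) {h : CoordSpace}
    (hh : ∀ n, h (some n) = -h none * a n) : h = 0 := by
  have hnone : h none = 0 := by
    by_contra hne
    have hmem := (memℓp_comp_of_injective (by norm_num) (lp.memℓp h)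
      (Option.some_injective ℕ)).const_mul (-h none)⁻¹
    refine ha ?_
    simpa only [hh, inv_mul_cancel_left₀ (neg_ne_zero.mpr hne)] using hmem
  ext i
  cases i with
  | none => exact hnone
  | some n => simp [hh, hnone]

theorem eq_zero_of_taylorCoeff_eq_zero (hcd : ∀ n, c n * d n = 0) (hc₂ : ¬Memℓp c 2)
    {h : CoordSpace} (hh : taylorCoeff c d h = 0) : h = 0 := by
  have hcoeff (n : ℕ) : h (some n) + c n * (h none - ∑ j ∈ range n, d j * h (some j)) = 0 :=
    congrFun hh n
  have hdh (n : ℕ) : d n * h (some n) = 0 := by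
    linear_combination d n * hcoeff n -
      (h none - ∑ j ∈ range n, d j * h (some j)) * hcd n
  have hsome (n : ℕ) : h (some n) = -h none * c n := by
    have := hcoeff n
    simp only [hdh, sum_const_zero] at this
    linear_combination this
  exact eq_zero_of_apply_some_eq_mul hc₂ hsome

theorem eq_of_inclusion_eqOn_ball (hcd : ∀ n, c n * d n = 0) (hc₂ : ¬Memℓp c 2)
    {h₁ h₂ : CoordSpace}
    (hh : Set.EqOn (inclusion hc hd h₁) (inclusion hc hd h₂) (ball 0 1)) : h₁ = h₂ := by
  have hdiff : Set.EqOn (inclusion hc hd (h₁ - h₂)) 0 (ball 0 1) := fun z hz ↦ by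
    rw [map_sub, Pi.sub_apply, hh hz, sub_self, Pi.zero_apply]
  have hcoeff : taylorSequence hc hd (h₁ - h₂) = 0 := eq_zero_of_discSum_eqOn_zero hdiff
  exact sub_eq_zero.mp
    (eq_zero_of_taylorCoeff_eq_zero hcd hc₂ (congrArg Subtype.val hcoeff))

/-- The coordinates of the monomial `z ^ n = b n + d n • (f - ∑ k ≤ n, c k • b k)`. -/
noncomputable def monomialVector (c d : ℕ → ℂ) (n : ℕ) : CoordSpace :=
  basisVector (some n) +
    d n • (basisVector none - ∑ k ∈ range (n + 1), c k • basisVector (some k))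

theorem taylorCoeff_basisVector_none : taylorCoeff c d (basisVector none) = c := by
  ext n
  simp [taylorCoeff_apply, basisVector_apply]

theorem taylorCoeff_basisVector_some (m n : ℕ) : taylorCoeff c d (basisVector (some m)) n =
    (if n = m then 1 else 0) - if m < n then c n * d m else 0 := by
  simp [taylorCoeff_apply, basisVector_apply, sub_eq_add_neg]

theorem taylorCoeff_monomialVector (hcd : ∀ n, c n * d n = 0) (m : ℕ) :
    taylorCoeff c d (monomialVector c d m) = Pi.single m 1 := by
  have hpartial : taylorCoeff c d (∑ k ∈ range (m + 1), c k • basisVector (some k)) =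
      fun n ↦ if n ≤ m then c n else 0 := by
    ext n
    simp [taylorCoeff_basisVector_some, mul_sub, mul_left_comm _ (c n), hcd]
  ext n
  simp only [monomialVector, map_add, map_smul, map_sub, hpartial, taylorCoeff_basisVector_none,
    Pi.add_apply, Pi.smul_apply, Pi.sub_apply, taylorCoeff_basisVector_some, Pi.single_apply,
    smul_eq_mul]
  rcases le_or_gt n m with hnm | hnm
  · simp [hnm, hnm.not_gt]
  · simp [hnm, hnm.not_ge, mul_comm]

/-- The coordinates of a polynomial, as a linear map. -/
noncomputable def polynomialVector (c d : ℕ → ℂ) : ℂ[X] →ₗ[ℂ] CoordSpace :=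
  (basisMonomials ℂ).constr ℂ (monomialVector c d)

theorem polynomialVector_monomial (n : ℕ) :
    polynomialVector c d (monomial n 1) = monomialVector c d n :=
  (basisMonomials ℂ).constr_basis ℂ (monomialVector c d) n

theorem inclusion_monomialVector (hcd : ∀ n, c n * d n = 0) (m : ℕ) {z : ℂ} (hz : z ∈ ball 0 1) :
    inclusion hc hd (monomialVector c d m) z = z ^ m := by
  rw [inclusion_apply hc hd _ hz, taylorCoeff_monomialVector hcd, tsum_eq_single m]
  · simp
  · intro n hn
    simp [hn]

theorem inclusion_polynomialVector (hcd : ∀ n, c n * d n = 0) (p : ℂ[X]) {z : ℂ}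
    (hz : z ∈ ball 0 1) : inclusion hc hd (polynomialVector c d p) z = p.eval z := by
  induction p using Polynomial.induction_on' with
  | add p q hp hq => simp only [map_add, Pi.add_apply, hp, hq, eval_add]
  | monomial n a =>
    have ha : monomial n a = a • monomial n (1 : ℂ) := by rw [smul_monomial, smul_eq_mul, mul_one]
    rw [ha, map_smul, map_smul, polynomialVector_monomial, Pi.smul_apply,
      inclusion_monomialVector hc hd hcd n hz, eval_smul, eval_monomial, one_mul]

theorem eq_zero_of_forall_inner_monomialVector (hcd : ∀ n, c n * d n = 0) (hd₂ : ¬Memℓp d 2)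
    {h : CoordSpace} (hh : ∀ n, inner ℂ (monomialVector c d n) h = 0) : h = 0 := by
  have hinner (n : ℕ) : h (some n) +
      star (d n) * (h none - ∑ k ∈ range (n + 1), star (c k) * h (some k)) = 0 := by
    simpa [monomialVector, inner_add_left, inner_sub_left, inner_smul_left, sum_inner,
      inner_basisVector_left, mul_comm] using hh n
  have hch (n : ℕ) : star (c n) * h (some n) = 0 := by
    have hcd' : star (c n) * star (d n) = 0 := by rw [← star_mul', hcd, star_zero]
    linear_combination star (c n) * hinner n -
      (h none - ∑ k ∈ range (n + 1), star (c k) * h (some k)) * hcd'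
  have hsome (n : ℕ) : h (some n) = -h none * star (d n) := by
    have := hinner n
    simp only [hch, sum_const_zero] at this
    linear_combination this
  have hd₂' : ¬Memℓp (star d) 2 := fun hmem ↦ hd₂ (star_star d ▸ hmem.star_mem)
  exact eq_zero_of_apply_some_eq_mul hd₂' hsome

theorem denseRange_polynomialVector (hcd : ∀ n, c n * d n = 0) (hd₂ : ¬Memℓp d 2) :
    DenseRange (polynomialVector c d) := by
  change Dense ((polynomialVector c d).range : Set CoordSpace)
  rw [Submodule.dense_iff_topologicalClosure_eq_top, Submodule.topologicalClosure_eq_top_iff,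
    Submodule.eq_bot_iff]
  refine fun h hh ↦ eq_zero_of_forall_inner_monomialVector hcd hd₂ fun n ↦ ?_
  exact hh _ ⟨monomial n 1, polynomialVector_monomial n⟩

theorem dense_setOf_inclusion_eq_eval (hcd : ∀ n, c n * d n = 0) (hd₂ : ¬Memℓp d 2) :
    Dense {h | ∃ p : ℂ[X], ∀ z ∈ ball 0 1, inclusion hc hd h z = p.eval z} := by
  refine (denseRange_polynomialVector hcd hd₂).mono ?_
  rintro _ ⟨p, rfl⟩
  exact ⟨p, fun z hz ↦ inclusion_polynomialVector hc hd hcd p hz⟩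

theorem exists_dilate_basisVector_none (hcd : ∀ n, c n * d n = 0) {r : ℂ} (hr : ‖r‖ < 1) :
    ∃ k : CoordSpace, k none = 0 ∧
      ∀ z ∈ ball 0 1, inclusion hc hd k z = inclusion hc hd (basisVector none) (r * z) := by
  let k : CoordSpace := ⟨_, memℓp_option_elim_zero (by norm_num) (hc.memℓp_mul_pow hr one_le_two)⟩
  have hnone : k none = 0 := rfl
  have hsome (n : ℕ) : k (some n) = c n * r ^ n := rfl
  have hdk (j : ℕ) : d j * (c j * r ^ j) = 0 := by linear_combination r ^ j * hcd j
  have hcoeff (n : ℕ) : taylorCoeff c d k n = r ^ n * taylorCoeff c d (basisVector none) n := by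
    rw [taylorCoeff_basisVector_none, taylorCoeff_apply]
    simp only [hnone, hsome, hdk, sum_const_zero]
    ring
  exact ⟨k, hnone, fun z hz ↦ discSum_of_dilate hr.le hcoeff hz⟩

theorem basisVector_notMem_topologicalClosure_span {i : Option ℕ} {s : Set CoordSpace}
    (hs : ∀ k ∈ s, k i = 0) : basisVector i ∉ (Submodule.span ℂ s).topologicalClosure := by
  have hne : basisVector i ≠ 0 := fun h ↦ by
    simpa [basisVector_apply] using congrArg (fun k : CoordSpace ↦ k i) h
  refine notMem_topologicalClosure_span_of_forall_inner_eq_zero hne fun k hk ↦ ?_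
  rw [inner_basisVector_left, hs k hk]

end CoordSpace

theorem exists_disjoint_summableOnDisc_not_memℓp_two : ∃ c d : ℕ → ℂ, SummableOnDisc c ∧
    SummableOnDisc d ∧ (∀ n, c n * d n = 0) ∧ ¬Memℓp c 2 ∧ ¬Memℓp d 2 := by
  have hone : SummableOnDisc (1 : ℕ → ℂ) := summableOnDisc_const 1
  refine ⟨{n | Even n}.indicator 1, {n | Odd n}.indicator 1, hone.indicator _, hone.indicator _,
    fun n ↦ ?_, ?_, ?_⟩
  · rcases n.even_or_odd with hn | hn
    · simp [hn]
    · simp [Nat.not_even_iff_odd.mpr hn]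
  · exact not_memℓp_indicator_one (by norm_num)
      (Nat.frequently_atTop_iff_infinite.mp Nat.frequently_even)
  · exact not_memℓp_indicator_one (by norm_num)
      (Nat.frequently_atTop_iff_infinite.mp Nat.frequently_odd)

end DiscSpace

open DiscSpace

/-- There exist a Hilbert holomorphic function space `H` on the unit disk in which the
polynomials are dense, and an `f ∈ H` lying outside the closed linear span of its radial
dilates `f_r(z) := f(rz)`, `0 < r < 1`. -/
theorem stmt16 :
    ∃ (H : Type) (_ : NormedAddCommGroup H) (_ : InnerProductSpace ℂ H) (_ : CompleteSpace H)
      (ι : H →ₗ[ℂ] (ℂ → ℂ)),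
      (∀ h : H, DifferentiableOn ℂ (ι h) (ball (0 : ℂ) 1)) ∧
      (∀ h₁ h₂ : H, (∀ z ∈ ball (0 : ℂ) 1, ι h₁ z = ι h₂ z) → h₁ = h₂) ∧
      (∀ K : Set ℂ, IsCompact K → K ⊆ ball (0 : ℂ) 1 →
        ∃ C : ℝ, ∀ h : H, ∀ z ∈ K, ‖ι h z‖ ≤ C * ‖h‖) ∧
      (∀ p : Polynomial ℂ, ∃ h : H, ∀ z ∈ ball (0 : ℂ) 1, ι h z = p.eval z) ∧
      Dense {h : H | ∃ p : Polynomial ℂ, ∀ z ∈ ball (0 : ℂ) 1, ι h z = p.eval z} ∧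
      ∃ (f : H) (dil : ℝ → H),
        -- `dil r` is the radial dilate `f_r` of `f`, as an element of `H`
        (∀ r : ℝ, 0 < r → r < 1 →
          ∀ z ∈ ball (0 : ℂ) 1, ι (dil r) z = ι f ((r : ℂ) * z)) ∧
        -- `f` is outside the closed linear span of its radial dilates
        f ∉ (Submodule.span ℂ (dil '' Set.Ioo (0 : ℝ) 1)).topologicalClosure := by
  obtain ⟨c, d, hc, hd, hcd, hc₂, hd₂⟩ := exists_disjoint_summableOnDisc_not_memℓp_two
  have hdilate (r : ℝ) (hr₀ : 0 < r) (hr₁ : r < 1) :=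
    exists_dilate_basisVector_none hc hd hcd (r := r) (by simpa [abs_of_pos hr₀] using hr₁)
  choose! dil hdil_none hdil using hdilate
  refine ⟨CoordSpace, inferInstance, inferInstance, inferInstance, inclusion hc hd,
    differentiableOn_inclusion hc hd, fun _ _ ↦ eq_of_inclusion_eqOn_ball hc hd hcd hc₂,
    fun _ ↦ exists_norm_inclusion_le hc hd,
    fun p ↦ ⟨_, fun _ ↦ inclusion_polynomialVector hc hd hcd p⟩,
    dense_setOf_inclusion_eq_eval hc hd hcd hd₂, basisVector none, dil, hdil, ?_⟩
  apply basisVector_notMem_topologicalClosure_span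
  rintro _ ⟨r, ⟨hr₀, hr₁⟩, rfl⟩
  exact hdil_none r hr₀ hr₁
end
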